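/- Let C([0,1]) be the Banach space of continuous real-valued functions on [0,1] with the supremum norm and C_0([0,1]) = {ψ ∈ C([0,1]) : ψ(0) = 0}. The map Q₁ : C([0,1]) → C_0([0,1]) × ℝ defined by Q₁(N) = (ψ₁, c₁) with ψ₁(x) = N(x) − N(0) − (1/2)∫_0^x N(y)² dy and c₁ = N(0) is of class C^∞ (infinitely Fréchet differentiable). Its differential at 0 is the map δN ↦ (δN − δN(0), δN(0)), which is a Banach space isomorphism from C([0,1]) onto C_0([0,1]) × ℝ. Consequently, the restriction of Q₁ to an appropriate open neighborhood of 0 in C([0,1]) is a C^∞ diffeomorphism onto an open neighborhood of (0,0) in C_0([0,1]) × ℝ. -/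

import Mathlib

open Set Filter Topology

noncomputable section

/-- the unit interval `[0,1]`, as a compact topological space. -/
abbrev UI : Type := Set.Icc (0:ℝ) 1

/-- the point `0 ∈ [0,1]`. -/
def pt0 : UI := ⟨0, by norm_num⟩

/-- the closed subspace `C_0([0,1]) = {ψ ∈ C([0,1]) : ψ(0) = 0}`. -/
def C0sub : Submodule ℝ C(UI, ℝ) where
  carrier := {f | f pt0 = 0}
  add_mem' := by
    intro a b ha hb
    simp only [Set.mem_setOf_eq, ContinuousMap.add_apply] at *
    rw [ha, hb]; ring
  zero_mem' := by simp [Set.mem_setOf_eq]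
  smul_mem' := by
    intro c f hf
    simp only [Set.mem_setOf_eq, ContinuousMap.smul_apply, smul_eq_mul] at *
    rw [hf]; ring

/-- `N²`, extended to `ℝ` by projection onto `[0,1]`. -/
def sq2 (N : C(UI, ℝ)) : ℝ → ℝ := fun t => (N (Set.projIcc 0 1 zero_le_one t)) ^ 2

lemma sq2_cont (N : C(UI, ℝ)) : Continuous (sq2 N) :=
  (N.continuous.comp continuous_projIcc).pow 2

/-- the function part `ψ₁` of `Q₁(N)`:
`ψ₁(x) = N(x) - N(0) - (1/2) ∫_0^x N(y)² dy`. -/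
def psi1 (N : C(UI, ℝ)) : C(UI, ℝ) :=
  ⟨fun x => N x - N pt0 - (1/2) * ∫ t in (0:ℝ)..(x:ℝ), sq2 N t, by
    have hprim : Continuous fun y : ℝ => ∫ t in (0:ℝ)..y, sq2 N t :=
      intervalIntegral.continuous_primitive
        (fun a b => (sq2_cont N).intervalIntegrable a b) 0
    exact (N.continuous.sub continuous_const).sub
      (continuous_const.mul (hprim.comp continuous_subtype_val))⟩

lemma psi1_mem (N : C(UI, ℝ)) : psi1 N ∈ C0sub := by
  show (psi1 N) pt0 = 0
  have : ((pt0 : UI) : ℝ) = 0 := rfl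
  simp [psi1, this]

/-- the map `Q₁ : C([0,1]) → C_0([0,1]) × ℝ`,
`Q₁(N) = (N - N(0) - (1/2)∫_0^· N², N(0))`. -/
def Q1 : C(UI, ℝ) → (C0sub × ℝ) := fun N => (⟨psi1 N, psi1_mem N⟩, N pt0)

/-!
`Q₁` is the difference of a bounded linear isomorphism, `N ↦ (N - N(0), N(0))`, and the diagonal of
a bounded bilinear map, `(M, N) ↦ ((1/2) ∫_0^· M N, 0)`. Such a map is smooth and its derivative at
the origin is its linear part, so the inverse function theorem applies.
-/

section InverseFunction

variable {𝕜 : Type*} [RCLike 𝕜] {E F : Type*} [NormedAddCommGroup E] [NormedSpace 𝕜 E]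
  [CompleteSpace E] [NormedAddCommGroup F] [NormedSpace 𝕜 F]

-- Invertible operators form an open set, so the local inverse given by the inverse function theorem
-- is smooth at every point of a neighbourhood, not only at `f a`.
theorem exists_openPartialHomeomorph_contDiffOn_symm {n : WithTop ℕ∞} (hn : n ≠ 0) {f : E → F}
    {s : Set E} (hs : IsOpen s) (hf : ContDiffOn 𝕜 n f s) {a : E} (ha : a ∈ s) {f' : E ≃L[𝕜] F}
    (hf' : HasFDerivAt f (f' : E →L[𝕜] F) a) :
    ∃ Φ : OpenPartialHomeomorph E F, ⇑Φ = f ∧ a ∈ Φ.source ∧ Φ.source ⊆ s ∧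
      ContDiffOn 𝕜 n Φ.symm Φ.target := by
  have hfa : ContDiffAt 𝕜 n f a := hf.contDiffAt (hs.mem_nhds ha)
  let Φ := hfa.toOpenPartialHomeomorph f hf' hn
  let W : Set E := s ∩ fderiv 𝕜 f ⁻¹' range ((↑) : (E ≃L[𝕜] F) → E →L[𝕜] F)
  have hdf : ContinuousOn (fderiv 𝕜 f) s :=
    hf.continuousOn_fderiv_of_isOpen hs (ENat.one_le_iff_ne_zero_withTop.2 hn)
  have hW : IsOpen W := hdf.isOpen_inter_preimage hs ContinuousLinearEquiv.isOpen
  have haW : a ∈ W := ⟨ha, f', hf'.fderiv.symm⟩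
  refine ⟨Φ.restrOpen W hW, rfl, ⟨hfa.mem_toOpenPartialHomeomorph_source hf' hn, haW⟩,
    fun x hx ↦ hx.2.1, ?_⟩
  rintro y ⟨hy, hys, e, he⟩
  have hfy : ContDiffAt 𝕜 n f (Φ.symm y) := hf.contDiffAt (hs.mem_nhds hys)
  have hey : HasFDerivAt f (e : E →L[𝕜] F) (Φ.symm y) :=
    he ▸ (hfy.differentiableAt hn).hasFDerivAt
  exact (Φ.contDiffAt_symm hy hey hfy).contDiffWithinAt

end InverseFunction

section QuadraticMap

variable {𝕜 : Type*} [NontriviallyNormedField 𝕜] {E F : Type*} [NormedAddCommGroup E]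
  [NormedSpace 𝕜 E] [NormedAddCommGroup F] [NormedSpace 𝕜 F]

theorem contDiff_linear_sub_bilinear_diag {n : WithTop ℕ∞} (L : E →L[𝕜] F) (B : E →L[𝕜] E →L[𝕜] F) :
    ContDiff 𝕜 n fun x ↦ L x - B x x :=
  L.contDiff.sub (B.contDiff.clm_apply contDiff_id)

theorem hasFDerivAt_linear_sub_bilinear_diag (L : E →L[𝕜] F) (B : E →L[𝕜] E →L[𝕜] F) (x : E) :
    HasFDerivAt (fun x ↦ L x - B x x) (L - (B x + B.flip x)) x := by
  have hB : HasFDerivAt (fun x ↦ B x x) (B x + B.flip x) x := by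
    simpa using B.hasFDerivAt.clm_apply (hasFDerivAt_id x)
  exact L.hasFDerivAt.sub hB

end QuadraticMap

section Primitive

variable {E : Type*} [NormedAddCommGroup E] {a b : ℝ}

theorem intervalIntegrable_IccExtend (h : a ≤ b) (f : C(Icc a b, E)) (c d : ℝ) :
    IntervalIntegrable (IccExtend h f) MeasureTheory.volume c d :=
  (f.continuous.Icc_extend' (h := h)).intervalIntegrable c d

variable [NormedSpace ℝ E]

/-- The primitive of a continuous function on `[a, b]` that vanishes at `a`, as a linear map. The
integrand is extended to `ℝ` by `Set.IccExtend`, so that interval integrals make sense. -/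
def primitiveLM (h : a ≤ b) : C(Icc a b, E) →ₗ[ℝ] C(Icc a b, E) where
  toFun f := ⟨fun x ↦ ∫ t in a..x, IccExtend h f t,
    (intervalIntegral.continuous_primitive (intervalIntegrable_IccExtend h f) a).comp
      continuous_subtype_val⟩
  map_add' f g := by
    ext x
    exact intervalIntegral.integral_add (intervalIntegrable_IccExtend h f a x)
      (intervalIntegrable_IccExtend h g a x)
  map_smul' c f := by
    ext x
    exact intervalIntegral.integral_smul c (IccExtend h f)

theorem norm_primitiveLM_le (h : a ≤ b) (f : C(Icc a b, E)) :
    ‖primitiveLM h f‖ ≤ (b - a) * ‖f‖ := by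
  refine (ContinuousMap.norm_le _ (mul_nonneg (sub_nonneg.2 h) (norm_nonneg f))).2 fun x ↦ ?_
  calc ‖∫ t in a..x, IccExtend h f t‖
      ≤ ‖f‖ * |x - a| :=
        intervalIntegral.norm_integral_le_of_norm_le_const fun _ _ ↦ f.norm_coe_le_norm _
    _ = (x - a) * ‖f‖ := by rw [abs_of_nonneg (sub_nonneg.2 x.2.1), mul_comm]
    _ ≤ (b - a) * ‖f‖ := by gcongr; exact x.2.2

/-- The Volterra operator `f ↦ ∫_a^· f` on continuous functions on `[a, b]`, as a bounded
operator. -/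
def primitiveCLM (h : a ≤ b) : C(Icc a b, E) →L[ℝ] C(Icc a b, E) :=
  (primitiveLM h).mkContinuous (b - a) (norm_primitiveLM_le h)

theorem primitiveCLM_apply (h : a ≤ b) (f : C(Icc a b, E)) (x : Icc a b) :
    primitiveCLM h f x = ∫ t in a..x, IccExtend h f t :=
  rfl

end Primitive

theorem C0sub_eq_ker_evalCLM : C0sub = (ContinuousMap.evalCLM ℝ pt0 : C(UI, ℝ) →L[ℝ] ℝ).ker :=
  rfl

/-- The Banach space isomorphism `N ↦ (N - N(0), N(0))`, splitting off the constants from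
`C([0,1])`; it is the linear part of `Q₁`. -/
def subEvalEquiv : C(UI, ℝ) ≃L[ℝ] C0sub × ℝ :=
  (ContinuousLinearEquiv.equivOfRightInverse (ContinuousMap.evalCLM ℝ pt0)
    (ContinuousLinearMap.const ℝ UI) fun _ ↦ rfl).trans
  ((ContinuousLinearEquiv.prodComm ℝ _ _).trans
    ((ContinuousLinearEquiv.ofEq _ _ C0sub_eq_ker_evalCLM.symm).prodCongr (.refl ℝ ℝ)))

theorem subEvalEquiv_fst_apply (N : C(UI, ℝ)) (x : UI) :
    ((subEvalEquiv N).1 : C(UI, ℝ)) x = N x - N pt0 :=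
  rfl

theorem subEvalEquiv_snd (N : C(UI, ℝ)) : (subEvalEquiv N).2 = N pt0 :=
  rfl

theorem primitiveCLM_mem_C0sub (f : C(UI, ℝ)) : primitiveCLM zero_le_one f ∈ C0sub :=
  (primitiveCLM_apply zero_le_one f pt0).trans intervalIntegral.integral_same

/-- The bounded bilinear map `(M, N) ↦ ((1/2) ∫_0^· M N, 0)`, whose diagonal is the quadratic part
of `Q₁`. -/
def halfPrimitiveMul : C(UI, ℝ) →L[ℝ] C(UI, ℝ) →L[ℝ] C0sub × ℝ :=
  let halfPrimitive : C(UI, ℝ) →L[ℝ] C0sub :=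
    (1 / 2 : ℝ) • (primitiveCLM zero_le_one).codRestrict C0sub primitiveCLM_mem_C0sub
  .compL ℝ C(UI, ℝ) C(UI, ℝ) (C0sub × ℝ) (.inl ℝ C0sub ℝ ∘L halfPrimitive) ∘L
    .mul ℝ C(UI, ℝ)

theorem halfPrimitiveMul_fst_apply (M N : C(UI, ℝ)) (x : UI) :
    ((halfPrimitiveMul M N).1 : C(UI, ℝ)) x =
      (1 / 2) * ∫ t in (0 : ℝ)..x, IccExtend zero_le_one (M * N) t :=
  rfl

theorem halfPrimitiveMul_snd (M N : C(UI, ℝ)) : (halfPrimitiveMul M N).2 = 0 :=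
  rfl

theorem Q1_eq_subEvalEquiv_sub : Q1 = fun N ↦ subEvalEquiv N - halfPrimitiveMul N N := by
  funext N
  have sq2_eq : sq2 N = IccExtend zero_le_one ⇑(N * N) := funext fun t ↦ pow_two _
  refine Prod.ext (Subtype.ext (ContinuousMap.ext fun x ↦ ?_)) ?_
  · change N x - N pt0 - 1 / 2 * ∫ t in (0 : ℝ)..x, sq2 N t =
      ((subEvalEquiv N).1 : C(UI, ℝ)) x - ((halfPrimitiveMul N N).1 : C(UI, ℝ)) x
    rw [subEvalEquiv_fst_apply, halfPrimitiveMul_fst_apply, sq2_eq]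
  · change N pt0 = (subEvalEquiv N).2 - (halfPrimitiveMul N N).2
    rw [subEvalEquiv_snd, halfPrimitiveMul_snd, sub_zero]

theorem contDiff_Q1 {n : WithTop ℕ∞} : ContDiff ℝ n Q1 := by
  rw [Q1_eq_subEvalEquiv_sub]
  exact contDiff_linear_sub_bilinear_diag (𝕜 := ℝ) (E := C(UI, ℝ)) (F := C0sub × ℝ)
    (subEvalEquiv : C(UI, ℝ) →L[ℝ] C0sub × ℝ) halfPrimitiveMul

theorem hasFDerivAt_Q1_zero : HasFDerivAt Q1 (subEvalEquiv : C(UI, ℝ) →L[ℝ] C0sub × ℝ) 0 := by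
  rw [Q1_eq_subEvalEquiv_sub]
  simpa using hasFDerivAt_linear_sub_bilinear_diag (𝕜 := ℝ) (E := C(UI, ℝ)) (F := C0sub × ℝ)
    (subEvalEquiv : C(UI, ℝ) →L[ℝ] C0sub × ℝ) halfPrimitiveMul 0

theorem Q1_zero : Q1 0 = 0 := by
  simp [Q1_eq_subEvalEquiv_sub]

/-- `Q₁` is `C^∞`, its differential at `0` is the Banach space isomorphism
`δN ↦ (δN - δN(0), δN(0))`, and `Q₁` restricts to a `C^∞` diffeomorphism between open
neighbourhoods of `0` and `(0,0)`. -/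
theorem stmt13 :
    ContDiff ℝ (⊤ : ℕ∞) Q1 ∧
    (∃ e : C(UI, ℝ) ≃L[ℝ] (C0sub × ℝ),
      (∀ δN : C(UI, ℝ),
        (∀ x : UI, (((e δN).1 : C(UI, ℝ)) x = δN x - δN pt0)) ∧ (e δN).2 = δN pt0) ∧
      HasFDerivAt Q1 (e : C(UI, ℝ) →L[ℝ] (C0sub × ℝ)) 0) ∧
    ∃ U : Set C(UI, ℝ), IsOpen U ∧ (0 : C(UI, ℝ)) ∈ U ∧
      ∃ V : Set (C0sub × ℝ), IsOpen V ∧ (0 : C0sub × ℝ) ∈ V ∧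
        Q1 '' U = V ∧ Set.InjOn Q1 U ∧
        ∃ Qi : (C0sub × ℝ) → C(UI, ℝ), ContDiffOn ℝ (⊤ : ℕ∞) Qi V ∧
          (∀ x ∈ U, Qi (Q1 x) = x) ∧ ∀ y ∈ V, Q1 (Qi y) = y := by
  obtain ⟨Φ, hΦ, h0, -, hsymm⟩ := exists_openPartialHomeomorph_contDiffOn_symm (by simp) isOpen_univ
    (contDiff_Q1 (n := (⊤ : ℕ∞))).contDiffOn (mem_univ 0) hasFDerivAt_Q1_zero
  refine ⟨contDiff_Q1,
    ⟨subEvalEquiv, fun δN ↦ ⟨subEvalEquiv_fst_apply δN, subEvalEquiv_snd δN⟩, hasFDerivAt_Q1_zero⟩,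
    Φ.source, Φ.open_source, h0, Φ.target, Φ.open_target, ?_⟩
  rw [← Q1_zero, ← hΦ]
  exact ⟨Φ.map_source h0, Φ.image_source_eq_target, Φ.injOn, Φ.symm, hsymm,
    fun _ ↦ Φ.left_inv, fun _ ↦ Φ.right_inv⟩

end
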